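/- Integral version of Farkas' Lemma (Lemma 2): Let A be a real m×n matrix and b ∈ ℝᵐ such that the system A·x ≤ b is satisfiable and integral, and let c ∈ ℝⁿ and δ ∈ ℝ. Then the following are equivalent: (1) for every x ∈ ℤⁿ with A·x ≤ b one has cᵀx ≤ δ; (2) there exists λ ∈ ℝᵐ with λ ≥ 0 (componentwise), λᵀA = cᵀ, and λᵀb ≤ δ. -/

import Mathlib

open Matrix

theorem farkas_aux {V : Type*} [AddCommGroup V] [Module ℝ V] (k : ℕ) :
    ∀ (a : Fin k → V →ₗ[ℝ] ℝ) (c : V →ₗ[ℝ] ℝ),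
      (∀ x, (∀ i, a i x ≤ 0) → c x ≤ 0) →
      ∃ l : Fin k → ℝ, (∀ i, 0 ≤ l i) ∧ ∀ x, c x = ∑ i, l i * a i x := by
  induction k with
  | zero =>
    intro a c h
    refine ⟨fun _ => 0, fun i => le_rfl, fun x => ?_⟩
    have h1 := h x (fun i => i.elim0)
    have h2 := h (-x) (fun i => i.elim0)
    rw [map_neg] at h2
    simp
    linarith
  | succ k ih =>
    intro a c h
    by_cases hc : ∀ x, (∀ i : Fin k, a i.succ x ≤ 0) → c x ≤ 0
    · obtain ⟨l, hl, hl'⟩ := ih (fun i => a i.succ) c hc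
      refine ⟨Fin.cons 0 l, fun i => ?_, fun x => ?_⟩
      · refine Fin.cases ?_ (fun j => ?_) i
        · simp
        · simpa using hl j
      · rw [Fin.sum_univ_succ]
        simpa using hl' x
    · push Not at hc
      obtain ⟨y, hy, hcy⟩ := hc
      have h0 : 0 < a 0 y := by
        by_contra hn
        push Not at hn
        have := h y (fun i => Fin.cases hn hy i)
        linarith
      set r := a 0 y with hr
      have key : ∀ x, (∀ i : Fin k, (a i.succ - (a i.succ y / r) • a 0) x ≤ 0) →
          (c - (c y / r) • a 0) x ≤ 0 := by
        intro x hx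
        have := h (x - (a 0 x / r) • y) (fun i => by
          refine Fin.cases ?_ (fun j => ?_) i
          · simp only [map_sub, map_smul, smul_eq_mul]
            rw [← hr, div_mul_cancel₀ _ h0.ne']
            simp
          · have := hx j
            simp only [map_sub, map_smul, smul_eq_mul, LinearMap.sub_apply,
              LinearMap.smul_apply] at this ⊢
            convert this using 2
            ring)
        simp only [map_sub, map_smul, smul_eq_mul, LinearMap.sub_apply,
              LinearMap.smul_apply] at this ⊢
        convert this using 2
        ring
      obtain ⟨l, hl, hl'⟩ := ih _ _ key
      refine ⟨Fin.cons (c y / r - ∑ i, l i * (a i.succ y / r)) l, fun i => ?_, fun x => ?_⟩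
      · refine Fin.cases ?_ (fun j => ?_) i
        · simp only [Fin.cons_zero]
          have h1 : ∑ i, l i * (a i.succ y / r) ≤ 0 :=
            Finset.sum_nonpos fun i _ =>
              mul_nonpos_of_nonneg_of_nonpos (hl i) (div_nonpos_of_nonpos_of_nonneg (hy i) h0.le)
          have h2 : 0 < c y / r := div_pos hcy h0
          linarith
        · simpa using hl j
      · rw [Fin.sum_univ_succ]
        have := hl' x
        simp only [LinearMap.sub_apply, LinearMap.smul_apply, smul_eq_mul, mul_sub,
          Finset.sum_sub_distrib] at this
        simp only [Fin.cons_zero, Fin.cons_succ, sub_mul, Finset.sum_mul]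
        simp only [← mul_assoc] at this ⊢
        linarith

/-- Integral version of Farkas' Lemma (Lemma 2). -/
theorem integral_farkas {m n : ℕ}
    (A : Matrix (Fin m) (Fin n) ℝ) (b : Fin m → ℝ) (c : Fin n → ℝ) (δ : ℝ)
    (hsat : ∃ x, A.mulVec x ≤ b)
    (hintegral : {x : Fin n → ℝ | A.mulVec x ≤ b} =
      convexHull ℝ ((fun z : Fin n → ℤ => fun i => (z i : ℝ)) ''
        {z : Fin n → ℤ | A.mulVec (fun i => (z i : ℝ)) ≤ b})) :
    (∀ z : Fin n → ℤ, A.mulVec (fun i => (z i : ℝ)) ≤ b →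
        c ⬝ᵥ (fun i => (z i : ℝ)) ≤ δ) ↔
      ∃ lam : Fin m → ℝ, 0 ≤ lam ∧ Matrix.vecMul lam A = c ∧ lam ⬝ᵥ b ≤ δ := by
  constructor
  · intro hz
    let f : (Fin n → ℝ) → ((Fin n → ℝ) →ₗ[ℝ] ℝ) := fun v =>
      { toFun := fun x => v ⬝ᵥ x
        map_add' := fun x y => dotProduct_add v x y
        map_smul' := fun r x => by simp }
    have hf : ∀ v x, f v x = v ⬝ᵥ x := fun _ _ => rfl
    have hreal : ∀ x : Fin n → ℝ, A.mulVec x ≤ b → c ⬝ᵥ x ≤ δ := by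
      intro x hx
      have hx' : x ∈ {x : Fin n → ℝ | A.mulVec x ≤ b} := hx
      rw [hintegral] at hx'
      have hconv : Convex ℝ {x | f c x ≤ δ} := convex_halfSpace_le (f c).isLinear δ
      refine convexHull_min ?_ hconv hx'
      rintro _ ⟨z, hz', rfl⟩
      exact hz z hz'
    obtain ⟨x0, hx0⟩ := hsat
    let g : (Fin n → ℝ) → ℝ → ((Fin n → ℝ) × ℝ →ₗ[ℝ] ℝ) := fun v β =>
      (f v).comp (LinearMap.fst ℝ _ _) - β • LinearMap.snd ℝ _ _
    have hg : ∀ v β x t, g v β (x, t) = v ⬝ᵥ x - β * t := fun _ _ _ _ => rfl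
    obtain ⟨l, hl, hl'⟩ := farkas_aux (m + 1)
      (Fin.cons (g 0 1) (fun i => g (A i) (b i)) : Fin (m+1) → ((Fin n → ℝ) × ℝ →ₗ[ℝ] ℝ))
      (g c δ) (by
        rintro ⟨x, t⟩ h
        have ht := h 0
        have hA : ∀ i, A i ⬝ᵥ x - b i * t ≤ 0 := fun i => by simpa [hg] using h i.succ
        simp only [Fin.cons_zero, hg, zero_dotProduct] at ht
        rw [hg]
        have ht : 0 ≤ t := by linarith
        rcases ht.eq_or_lt with rfl | ht
        · by_contra hn
          push Not at hn
          simp only [mul_zero, sub_zero] at hn hA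
          set s := (|δ - c ⬝ᵥ x0| + 1) / (c ⬝ᵥ x) with hs
          have hs0 : 0 ≤ s := by positivity
          have := hreal (x0 + s • x) (fun i => by
            have h1 : A i ⬝ᵥ x0 ≤ b i := hx0 i
            have h2 := mul_nonpos_of_nonneg_of_nonpos hs0 (hA i)
            change A i ⬝ᵥ (x0 + s • x) ≤ b i
            rw [dotProduct_add, dotProduct_smul, smul_eq_mul]
            linarith)
          rw [dotProduct_add, dotProduct_smul, smul_eq_mul, hs, div_mul_cancel₀ _ hn.ne'] at this
          linarith [le_abs_self (δ - c ⬝ᵥ x0)]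
        · have := hreal (t⁻¹ • x) (fun i => by
            change A i ⬝ᵥ (t⁻¹ • x) ≤ b i
            rw [dotProduct_smul, smul_eq_mul, inv_mul_le_iff₀ ht]
            linarith [hA i])
          rw [dotProduct_smul, smul_eq_mul, inv_mul_le_iff₀ ht] at this
          linarith)
    refine ⟨fun i => l i.succ, fun i => hl _, ?_, ?_⟩
    · ext j
      have := hl' (Pi.single j 1, 0)
      rw [Fin.sum_univ_succ] at this
      simp [hg] at this
      rw [this]
      rfl
    · have := hl' (0, 1)
      rw [Fin.sum_univ_succ] at this
      simp [hg] at this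
      have h0 := hl 0
      simp only [dotProduct]
      linarith
  · rintro ⟨l, hl, rfl, hb⟩ z hz
    rw [← dotProduct_mulVec]
    exact (dotProduct_le_dotProduct_of_nonneg_left hz hl).trans hb
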